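/- Let k > 0 and suppose m(kn) ≠ m(k) for every integer n with |n| ≥ 2. If v is a complex-valued, 2π-periodic H¹ function satisfying ∂_z(−M_k + m(k))v = 0 in the Fourier sense, i.e. n·(m(k) − m(kn))·v̂_n = 0 for every n ∈ ℤ, then v̂_n = 0 for all |n| ≥ 2; that is, v(z) = α + β e^{iz} + γ e^{−iz} for some complex constants α, β, γ. In particular, zero is an eigenvalue of the linearization L₀ = ∂_z(−M_k + m(k)) about the zero solution with geometric multiplicity exactly three, with eigenspace spanned by 1, cos(z) and sin(z). -/

import Mathlib

open Real Filter

/-- The capillary Whitham symbol `m(z) = √(gd(1 + τ z²) tanh z / z)`, `m(0) = √(gd)`,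
with `τ = T/(g d²)`. -/
noncomputable def mW (g d T : ℝ) (z : ℝ) : ℝ :=
  if z = 0 then Real.sqrt (g * d)
  else Real.sqrt (g * d * (1 + T / (g * d ^ 2) * z ^ 2) * Real.tanh z / z)

/-- The `n`-th Fourier coefficient of a complex-valued `2π`-periodic function. -/
noncomputable def fcoefC (f : ℝ → ℂ) (n : ℤ) : ℂ :=
  (1 / (2 * Real.pi)) *
    ∫ z in (-Real.pi)..Real.pi, Complex.exp (-(n : ℂ) * (z : ℂ) * Complex.I) * f z

/-- if `m(kn) ≠ m(k)` for all integers `|n| ≥ 2` and `v` is a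
complex-valued, `2π`-periodic `H¹` function with `∂_z(−M_k + m(k)) v = 0` in the Fourier
sense, then `v̂ₙ = 0` for `|n| ≥ 2` and `v(z) = α + β e^{iz} + γ e^{−iz}`: zero is an
eigenvalue of the linearization about the zero solution with geometric multiplicity
exactly three, the eigenspace being spanned by `1`, `cos z` and `sin z`. -/
theorem whitham_linearization_zero_eigenspace (g d T : ℝ)
    (hg : 0 < g) (hd : 0 < d) (hT : 0 ≤ T) (k : ℝ) (hk : 0 < k)
    (hm : ∀ n : ℤ, 2 ≤ |n| → mW g d T (k * (n : ℝ)) ≠ mW g d T k)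
    (v : ℝ → ℂ) (hv : Continuous v) (hper : Function.Periodic v (2 * Real.pi))
    (hH1 : Summable fun n : ℤ => (1 + (n : ℝ) ^ 2) * ‖fcoefC v n‖ ^ 2)
    (heq : ∀ n : ℤ,
      (n : ℂ) * ((mW g d T k : ℂ) - (mW g d T (k * (n : ℝ)) : ℂ)) * fcoefC v n = 0) :
    (∀ n : ℤ, 2 ≤ |n| → fcoefC v n = 0) ∧
    ∃ α β γ : ℂ, ∀ z : ℝ,
      v z = α + β * Complex.exp ((z : ℂ) * Complex.I) +
        γ * Complex.exp (-(z : ℂ) * Complex.I) := by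
  have : Fact (0 < 2 * Real.pi) := ⟨Real.two_pi_pos⟩
  have h0 : ∀ n : ℤ, 2 ≤ |n| → fcoefC v n = 0 := by
    intro n hn
    have h := heq n
    rcases mul_eq_zero.mp h with h | h
    · exfalso
      rcases mul_eq_zero.mp h with h | h
      · have : n = 0 := by exact_mod_cast h
        subst this
        norm_num at hn
      · apply hm n hn
        have := sub_eq_zero.mp h
        exact_mod_cast this.symm
    · exact h
  refine ⟨h0, ?_⟩
  let f : C(AddCircle (2 * Real.pi), ℂ) := ⟨hper.lift, hv.quotient_lift _⟩
  have hfv : ∀ z : ℝ, f (z : AddCircle (2 * Real.pi)) = v z := fun z => rfl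
  have hc : ∀ n : ℤ, fourierCoeff f n = fcoefC v n := by
    intro n
    rw [fourierCoeff_eq_intervalIntegral f n (-Real.pi), fcoefC]
    rw [show -Real.pi + 2 * Real.pi = Real.pi by ring, Complex.real_smul]
    congr 1
    · push_cast
      rfl
    · apply intervalIntegral.integral_congr
      intro z _
      simp only [smul_eq_mul, hfv, fourier_coe_apply]
      congr 2
      have : (Real.pi : ℂ) ≠ 0 := by exact_mod_cast Real.pi_ne_zero
      push_cast
      field_simp
  have hz : ∀ n ∉ ({0, 1, -1} : Finset ℤ), fourierCoeff f n = 0 := by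
    intro n hn
    rw [hc]
    apply h0
    simp only [Finset.mem_insert, Finset.mem_singleton, not_or] at hn
    rcases abs_cases n with h | h <;> omega
  have hs : Summable (fourierCoeff f) := summable_of_ne_finset_zero hz
  refine ⟨fcoefC v 0, fcoefC v 1, fcoefC v (-1), fun z => ?_⟩
  have h1 := has_pointwise_sum_fourier_series_of_summable hs (z : AddCircle (2 * Real.pi))
  have h2 := hasSum_sum_of_ne_finset_zero (L := SummationFilter.unconditional ℤ) (s := ({0, 1, -1} : Finset ℤ))
    (f := fun n => fourierCoeff f n • fourier n (z : AddCircle (2 * Real.pi)))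
    (fun n hn => by rw [hz n hn, zero_smul])
  have h3 := h1.unique h2
  rw [hfv] at h3
  have hpi : (Real.pi : ℂ) ≠ 0 := by exact_mod_cast Real.pi_ne_zero
  have e1 : 2 * (Real.pi : ℂ) * Complex.I * z / (2 * Real.pi) = z * Complex.I := by
    field_simp
  rw [h3, Finset.sum_insert (by decide), Finset.sum_insert (by decide), Finset.sum_singleton]
  simp only [hc, fourier_coe_apply, smul_eq_mul]
  push_cast
  have e2 : 2 * (Real.pi : ℂ) * Complex.I * (-1) * z / (2 * Real.pi) = -z * Complex.I := by
    field_simp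
  rw [e2]
  simp only [mul_zero, zero_mul, zero_div, Complex.exp_zero, mul_one, e1]
  ring
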